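/- arXiv:2507.04743 — 3 statements merged into one kernel-verified Lean document; each statement's English description precedes it below -/
import Mathlib

section
/- For all natural numbers a ≤ b and every β ∈ ⋀^b V*, one has ι_{𝟙_a} β = C(b, a) · β, where C(b, a) denotes the binomial coefficient b choose a. -/
/-!
Both sides are functionals on `⋀^(a+s) V`, so it suffices to compare them on decomposable
vectors `w₁ ∧ ⋯ ∧ w_(a+s)`. Expanding the wedge product of forms as an alternating sum over all
permutations (rather than over shuffles, which costs a factor `a! s!`) gives, for `T = θ ⊗ u`,
`a! s! (ι_T β)(w) = ∑ σ, sign σ • θ(w_σ(1) ∧ ⋯ ∧ w_σ(a)) β(u ∧ w_σ(a+1) ∧ ⋯ ∧ w_σ(a+s))`.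
The product `θ(x) u` is the value at `x` of the endomorphism associated with `θ ⊗ u`, so by
linearity in `T` (`iotaT_apply_ιMultiP`) the formula makes sense for every `T`, in terms of its
endomorphism only. When this endomorphism is the identity, the term of `σ` is
`sign σ • β(w_σ(1) ∧ ⋯ ∧ w_σ(a+s)) = β(w)`, and the sum is `(a+s)! β(w)`. Dividing by `a! s!`
produces the binomial coefficient.
-/


open Module
open scoped TensorProduct

noncomputable section

namespace GPB

variable {V : Type*} [AddCommGroup V] [Module ℝ V]

/-- The product of a `p`-vector and a `q`-vector is a `(p+q)`-vector. -/
theorem wedge_mem {p q r : ℕ} (h : p + q = r) {x y : ExteriorAlgebra ℝ V}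
    (hx : x ∈ ⋀[ℝ]^p V) (hy : y ∈ ⋀[ℝ]^q V) : x * y ∈ ⋀[ℝ]^r V := by
  subst h
  show x * y ∈ LinearMap.range (ExteriorAlgebra.ι ℝ : V →ₗ[ℝ] ExteriorAlgebra ℝ V) ^ (p + q)
  rw [pow_add]
  exact Submodule.mul_mem_mul hx hy

/-- The wedge (exterior) product of multivectors, as a bilinear map
`⋀^p V × ⋀^q V → ⋀^r V` (where `p + q = r`). -/
def wedgeBil {p q r : ℕ} (h : p + q = r) :
    ⋀[ℝ]^p V →ₗ[ℝ] ⋀[ℝ]^q V →ₗ[ℝ] ⋀[ℝ]^r V :=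
  LinearMap.mk₂ ℝ (fun u w => ⟨u.1 * w.1, wedge_mem h u.2 w.2⟩)
    (fun u u' w => Subtype.ext (by simp [add_mul]))
    (fun c u w => Subtype.ext (by simp [smul_mul_assoc]))
    (fun u w w' => Subtype.ext (by simp [mul_add]))
    (fun c u w => Subtype.ext (by simp [mul_smul_comm]))

/-- Contraction of an `r`-form by a `p`-multivector (`p + q = r`):
`(ι_u α) w = α (u ∧ w)`.  Bilinear in `u` and `α`. -/
def contrBil {p q r : ℕ} (h : p + q = r) :
    ⋀[ℝ]^p V →ₗ[ℝ] Dual ℝ (⋀[ℝ]^r V) →ₗ[ℝ] Dual ℝ (⋀[ℝ]^q V) :=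
  (LinearMap.llcomp ℝ (⋀[ℝ]^q V) (⋀[ℝ]^r V) ℝ).flip.comp (wedgeBil h)

/-- A vector `X : V` as an element of `⋀^1 V`. -/
def ιOne (X : V) : ⋀[ℝ]^1 V :=
  ⟨ExteriorAlgebra.ι ℝ X, by simpa only [pow_one] using LinearMap.mem_range_self _ X⟩

/-- `ιMulti` with values in the `n`-th exterior power. -/
def ιMultiP (n : ℕ) : V [⋀^Fin n]→ₗ[ℝ] (⋀[ℝ]^n V) :=
  (ExteriorAlgebra.ιMulti ℝ n).codRestrict (⋀[ℝ]^n V)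
    (fun v => ExteriorAlgebra.ιMulti_range ℝ n (Set.mem_range_self v))

/-- A linear functional on `⋀^n V`, seen as an alternating `n`-form on `V`. -/
def toAlt {n : ℕ} : Dual ℝ (⋀[ℝ]^n V) →ₗ[ℝ] (V [⋀^Fin n]→ₗ[ℝ] ℝ) where
  toFun θ := θ.compAlternatingMap (ιMultiP n)
  map_add' _ _ := rfl
  map_smul' _ _ := rfl

/-- A linear map on `⋀^n V` built out of an alternating `n`-multilinear map. -/
def extendL {n : ℕ} {N : Type*} [AddCommGroup N] [Module ℝ N] :
    (V [⋀^Fin n]→ₗ[ℝ] N) →ₗ[ℝ] (⋀[ℝ]^n V →ₗ[ℝ] N) :=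
  (LinearMap.lcomp ℝ N (Submodule.subtype (⋀[ℝ]^n V))).comp
    (ExteriorAlgebra.liftAlternating.comp
      (LinearMap.single ℝ (fun i => V [⋀^Fin i]→ₗ[ℝ] N) n))

/-- The wedge product of exterior forms (functionals on exterior powers),
as a bilinear map. -/
def formWedgeBil {r m t : ℕ} (h : r + m = t) :
    Dual ℝ (⋀[ℝ]^r V) →ₗ[ℝ] Dual ℝ (⋀[ℝ]^m V) →ₗ[ℝ] Dual ℝ (⋀[ℝ]^t V) := by
  subst h
  exact TensorProduct.curry
    (extendL.comp
      (((AlternatingMap.domDomCongrₗ ℝ finSumFinEquiv).toLinearMap).comp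
        ((LinearMap.compAlternatingMapₗ ℝ (TensorProduct.lid ℝ ℝ).toLinearMap).comp
          (AlternatingMap.domCoprod'.comp (TensorProduct.map toAlt toAlt)))))

/-- Contraction of a `c`-form `γ` by a multivector-valued form
`T ∈ ⋀^r V* ⊗ ⋀^q V`:  on decomposables, `ι_{θ ⊗ v} γ = θ ∧ (ι_v γ)`.
Here `q + s = c` and `r + s = d`. -/
def iotaT {r q c d : ℕ} (s : ℕ) (h₁ : q + s = c) (h₂ : r + s = d) :
    (Dual ℝ (⋀[ℝ]^r V) ⊗[ℝ] ⋀[ℝ]^q V) →ₗ[ℝ]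
      Dual ℝ (⋀[ℝ]^c V) →ₗ[ℝ] Dual ℝ (⋀[ℝ]^d V) := by
  subst h₁; subst h₂
  exact TensorProduct.lift
    (((LinearMap.llcomp ℝ (Dual ℝ (⋀[ℝ]^(q+s) V)) (Dual ℝ (⋀[ℝ]^s V))
          (Dual ℝ (⋀[ℝ]^(r+s) V))).comp (formWedgeBil rfl)).compl₂ (contrBil rfl))

/-- The canonical map `⋀^k V* ⊗ ⋀^a V → Hom(⋀^a V*, ⋀^k V*)`,
`θ ⊗ u ↦ (α ↦ α (u) • θ)`. -/
def pairHom (k a : ℕ) :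
    (Dual ℝ (⋀[ℝ]^k V) ⊗[ℝ] ⋀[ℝ]^a V) →ₗ[ℝ]
      (Dual ℝ (⋀[ℝ]^a V) →ₗ[ℝ] Dual ℝ (⋀[ℝ]^k V)) :=
  (dualTensorHom ℝ (Dual ℝ (⋀[ℝ]^a V)) (Dual ℝ (⋀[ℝ]^k V))).comp
    ((TensorProduct.map (Dual.eval ℝ (⋀[ℝ]^a V)) LinearMap.id).comp
      (TensorProduct.comm ℝ (Dual ℝ (⋀[ℝ]^k V)) (⋀[ℝ]^a V)).toLinearMap)


/-- Functionals on `⋀^n V` are determined by their values on decomposable vectors. -/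
theorem dual_ext {n : ℕ} {f g : Dual ℝ (⋀[ℝ]^n V)}
    (h : ∀ w : Fin n → V, f (ιMultiP n w) = g (ιMultiP n w)) : f = g :=
  exteriorPower.linearMap_ext (AlternatingMap.ext h)

theorem extendL_ιMultiP {n : ℕ} (f : V [⋀^Fin n]→ₗ[ℝ] ℝ) (w : Fin n → V) :
    extendL f (ιMultiP n w) = f w := by
  change ExteriorAlgebra.liftAlternating (Pi.single n f) (ExteriorAlgebra.ιMulti ℝ n w) = f w
  rw [ExteriorAlgebra.liftAlternating_apply_ιMulti, Pi.single_eq_same]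

theorem wedgeBil_ιMultiP {a s : ℕ} (v : Fin a ⊕ Fin s → V) :
    wedgeBil rfl (ιMultiP a fun i => v (.inl i)) (ιMultiP s fun i => v (.inr i)) =
      ιMultiP (a + s) (v ∘ finSumFinEquiv.symm) := by
  apply Subtype.ext
  change ExteriorAlgebra.ιMulti ℝ a _ * ExteriorAlgebra.ιMulti ℝ s _ =
    ExteriorAlgebra.ιMulti ℝ (a + s) _
  rw [ExteriorAlgebra.ιMulti_mul_ιMulti]
  congr 1
  ext i
  refine Fin.addCases (fun i => ?_) (fun i => ?_) i <;> simp

/-- The wedge product of forms as an alternating sum over all permutations; the factor `a! s!`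
counts the permutations lying over each shuffle. -/
theorem formWedgeBil_apply_ιMultiP {a s : ℕ} (θ : Dual ℝ (⋀[ℝ]^a V)) (η : Dual ℝ (⋀[ℝ]^s V))
    (w : Fin (a + s) → V) :
    (a.factorial * s.factorial) • formWedgeBil rfl θ η (ιMultiP (a + s) w) =
      ∑ σ : Equiv.Perm (Fin a ⊕ Fin s), Equiv.Perm.sign σ •
        (θ (ιMultiP a fun i => w (finSumFinEquiv (σ (.inl i)))) *
          η (ιMultiP s fun i => w (finSumFinEquiv (σ (.inr i))))) := by
  have h := congrArg (fun f => TensorProduct.lid ℝ ℝ (f (w ∘ finSumFinEquiv)))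
    (MultilinearMap.domCoprod_alternization_eq (toAlt θ) (toAlt η))
  simp only [Fintype.card_fin, MultilinearMap.alternatization_apply, map_sum,
    AlternatingMap.smul_apply, map_nsmul] at h
  have h' : formWedgeBil rfl θ η (ιMultiP (a + s) w) =
      TensorProduct.lid ℝ ℝ ((toAlt θ).domCoprod (toAlt η) (w ∘ finSumFinEquiv)) :=
    extendL_ιMultiP _ w
  rw [h', ← h]
  refine Finset.sum_congr rfl fun σ _ => ?_
  rw [Units.smul_def, Units.smul_def, map_zsmul]
  rfl

/-- The contraction `ι_T β`, evaluated on a decomposable vector, depends on `T` only through the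
associated endomorphism of `⋀^a V`. -/
theorem iotaT_apply_ιMultiP {a s : ℕ} (T : Dual ℝ (⋀[ℝ]^a V) ⊗[ℝ] ⋀[ℝ]^a V)
    (β : Dual ℝ (⋀[ℝ]^(a + s) V)) (w : Fin (a + s) → V) :
    (a.factorial * s.factorial) • iotaT s rfl rfl T β (ιMultiP (a + s) w) =
      ∑ σ : Equiv.Perm (Fin a ⊕ Fin s), Equiv.Perm.sign σ •
        β (wedgeBil rfl
          (dualTensorHom ℝ (⋀[ℝ]^a V) (⋀[ℝ]^a V) T
            (ιMultiP a fun i => w (finSumFinEquiv (σ (.inl i)))))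
          (ιMultiP s fun i => w (finSumFinEquiv (σ (.inr i))))) := by
  induction T with
  | zero => simp
  | add x y hx hy =>
    simp only [map_add, LinearMap.add_apply, smul_add, hx, hy, Finset.sum_add_distrib]
  | tmul θ u =>
    refine (formWedgeBil_apply_ιMultiP θ (contrBil rfl u β) w).trans ?_
    refine Finset.sum_congr rfl fun σ _ => ?_
    rw [dualTensorHom_apply, map_smul, LinearMap.smul_apply, map_smul, smul_eq_mul]
    rfl

/-- For `a ≤ b` (here `b = a + s`) and `β ∈ ⋀^b V*`,
one has `ι_{𝟙_a} β = (b choose a) • β`, where `𝟙_a` is the element of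
`⋀^a V* ⊗ ⋀^a V` corresponding to the identity of `⋀^a V`. -/
theorem contraction_by_identity_element
    [FiniteDimensional ℝ V] (a s : ℕ)
    (one : Dual ℝ (⋀[ℝ]^a V) ⊗[ℝ] ⋀[ℝ]^a V)
    (hone : dualTensorHom ℝ (⋀[ℝ]^a V) (⋀[ℝ]^a V) one = LinearMap.id)
    (β : Dual ℝ (⋀[ℝ]^(a + s) V)) :
    iotaT s rfl rfl one β = (((a + s).choose a : ℕ) : ℝ) • β := by
  refine dual_ext fun w => ?_
  have h := iotaT_apply_ιMultiP one β w
  have term (σ : Equiv.Perm (Fin a ⊕ Fin s)) : Equiv.Perm.sign σ •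
      β (wedgeBil rfl (ιMultiP a fun i => w (finSumFinEquiv (σ (.inl i))))
        (ιMultiP s fun i => w (finSumFinEquiv (σ (.inr i))))) = β (ιMultiP (a + s) w) := by
    rw [wedgeBil_ιMultiP fun i => w (finSumFinEquiv (σ i))]
    -- Transport `σ` to a permutation of `Fin (a + s)`, where alternation of `ιMultiP` applies.
    have e : (fun i => w (finSumFinEquiv (σ i))) ∘ finSumFinEquiv.symm =
        w ∘ finSumFinEquiv.permCongr σ := rfl
    rw [e, AlternatingMap.map_perm, Equiv.Perm.sign_permCongr, Units.smul_def, Units.smul_def,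
      map_zsmul, smul_smul, ← Units.val_mul, Int.units_mul_self, Units.val_one, one_smul]
  simp only [hone, LinearMap.id_apply, term, Finset.sum_const, Finset.card_univ,
    Fintype.card_perm, Fintype.card_sum, Fintype.card_fin, nsmul_eq_mul] at h
  have hf : ((a.factorial * s.factorial : ℕ) : ℝ) ≠ 0 := by positivity
  refine mul_left_cancel₀ hf (h.trans ?_)
  rw [← Nat.add_choose_mul_factorial_mul_factorial a s, Nat.choose_symm_add, LinearMap.smul_apply, smul_eq_mul]
  push_cast
  ring

end GPB
end
end

section
/- Fix n ≥ 1, a subspace S^n ⊆ ⋀^n V*, integers a and j with 1 ≤ j ≤ n − 1 and a ≥ j + 1, and an element T₁ ∈ ⋀^{a−1} V* ⊗ ⋀^n V. If there exists T ∈ ⋀^{a−j−1} V* ⊗ ⋀^{n−j} V such that ι_T β = ι_{T₁} β for all β ∈ S^n, then there exists T' ∈ ⋀^{a−j} V* ⊗ ⋀^{n+1−j} V such that ι_{T'} β = ι_{T₁} β for all β ∈ S^n. -/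
/-!
The new tensor is `T' = j⁻¹ ∑ᵢ (θ ∧ eⁱ) ⊗ (v ∧ eᵢ)` for `T = θ ⊗ v`, extended linearly, where `eᵢ`
is a basis of `V` with dual basis `eⁱ`. It satisfies `ι_{T'} β = ι_T β` for every `n`-form `β`:
contracting with `v ∧ eᵢ` is contracting with `v` and then with `eᵢ` (`contrBil_wedgeBil`), so with
the `j`-form `γ = ι_v β` the claim is Euler's identity `∑ᵢ (θ ∧ eⁱ) ∧ ι_{eᵢ} γ = j θ ∧ γ`
(`sum_wedge_contr`).

Euler's identity is proved without shuffles. A wedge product of alternatizations is the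
alternatization of the concatenation product (`toAlt_formWedgeBil`), and an `n`-form is the
alternatization of `1 / n!` times itself. Both sides are thus alternatizations of explicit
multilinear maps, which agree because `∑ᵢ eⁱ(x) γ(eᵢ, …) = γ(x, …)`; the factor `j` is
`j! / (j - 1)!`.
-/

open Module
open scoped TensorProduct

noncomputable section

namespace GPB

variable {V : Type*} [AddCommGroup V] [Module ℝ V]

/-- The concatenation product `v ↦ f (v₀, …, v_{r-1}) * g (v_r, …, v_{t-1})` of real-valued
multilinear maps in `r` and `m` variables, as a multilinear map in `t = r + m` variables. -/
def concatProd {r m t : ℕ} (h : r + m = t)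
    (f : MultilinearMap ℝ (fun _ : Fin r => V) ℝ) (g : MultilinearMap ℝ (fun _ : Fin m => V) ℝ) :
    MultilinearMap ℝ (fun _ : Fin t => V) ℝ :=
  (((TensorProduct.lid ℝ ℝ).toLinearMap.compMultilinearMap
    (MultilinearMap.domCoprod f g)).domDomCongr finSumFinEquiv).domDomCongr (finCongr h)

theorem concatProd_apply {r m t : ℕ} (h : r + m = t)
    (f : MultilinearMap ℝ (fun _ : Fin r => V) ℝ) (g : MultilinearMap ℝ (fun _ : Fin m => V) ℝ)
    (v : Fin t → V) :
    concatProd h f g v = f (fun i => v (Fin.cast h (Fin.castAdd m i)))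
      * g (fun i => v (Fin.cast h (Fin.natAdd r i))) := by
  simp [concatProd]

theorem alternatization_domDomCongr {ι κ : Type*} [Fintype ι] [DecidableEq ι] [Fintype κ]
    [DecidableEq κ] (e : ι ≃ κ) (f : MultilinearMap ℝ (fun _ : ι => V) ℝ) :
    (MultilinearMap.alternatization f).domDomCongr e
      = MultilinearMap.alternatization (f.domDomCongr e) := by
  ext v
  simp only [AlternatingMap.domDomCongr_apply, MultilinearMap.alternatization_apply,
    MultilinearMap.domDomCongr_apply]
  refine Fintype.sum_equiv e.permCongr _ _ fun σ => ?_
  simp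

theorem alternatization_smul {ι : Type*} [Fintype ι] [DecidableEq ι] (c : ℝ)
    (f : MultilinearMap ℝ (fun _ : ι => V) ℝ) :
    MultilinearMap.alternatization (c • f) = c • MultilinearMap.alternatization f := by
  ext v
  simp only [MultilinearMap.alternatization_apply, MultilinearMap.domDomCongr_apply, smul_apply,
    AlternatingMap.smul_apply, Finset.smul_sum]
  exact Finset.sum_congr rfl fun σ _ => smul_comm _ _ _

/-- An alternating form is the alternatization of itself divided by the factorial of its degree. -/
theorem alternatization_inv_factorial {n : ℕ} (f : V [⋀^Fin n]→ₗ[ℝ] ℝ) :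
    MultilinearMap.alternatization
      ((n.factorial : ℝ)⁻¹ • (f : MultilinearMap ℝ (fun _ : Fin n => V) ℝ)) = f := by
  rw [alternatization_smul, AlternatingMap.coe_alternatization, Fintype.card_fin,
    ← Nat.cast_smul_eq_nsmul ℝ, smul_smul, inv_mul_cancel₀, one_smul]
  exact_mod_cast n.factorial_ne_zero

theorem toAlt_apply {n : ℕ} (θ : Dual ℝ (⋀[ℝ]^n V)) (v : Fin n → V) :
    toAlt θ v = θ (exteriorPower.ιMulti ℝ n v) := rfl

theorem toAlt_extendL {n : ℕ} (f : V [⋀^Fin n]→ₗ[ℝ] ℝ) : toAlt (extendL f) = f := by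
  ext v
  rw [toAlt_apply]
  simp [extendL]

theorem toAlt_injective {n : ℕ} :
    Function.Injective (toAlt : Dual ℝ (⋀[ℝ]^n V) →ₗ[ℝ] (V [⋀^Fin n]→ₗ[ℝ] ℝ)) :=
  fun _ _ h => exteriorPower.linearMap_ext h

/-- The wedge product of two alternatizations is the alternatization of the concatenation product.
Since every form is an alternatization, this reduces iterated wedge products to concatenation
products, which are plainly associative. -/
theorem toAlt_formWedgeBil {r m t : ℕ} (h : r + m = t)
    {θ : Dual ℝ (⋀[ℝ]^r V)} {η : Dual ℝ (⋀[ℝ]^m V)}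
    {f : MultilinearMap ℝ (fun _ : Fin r => V) ℝ} {g : MultilinearMap ℝ (fun _ : Fin m => V) ℝ}
    (hf : toAlt θ = MultilinearMap.alternatization f)
    (hg : toAlt η = MultilinearMap.alternatization g) :
    toAlt (formWedgeBil h θ η) = MultilinearMap.alternatization (concatProd h f g) := by
  subst h
  have : formWedgeBil rfl θ η = extendL (((TensorProduct.lid ℝ ℝ).toLinearMap.compAlternatingMap
      ((toAlt θ).domCoprod (toAlt η))).domDomCongr finSumFinEquiv) := rfl
  rw [this, toAlt_extendL, hf, hg, ← MultilinearMap.domCoprod_alternization,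
    ← LinearMap.compMultilinearMap_alternatization, alternatization_domDomCongr]
  rfl

/-- A linear functional on `V` as an element of `⋀^1 V*`. -/
def oneForm (φ : Dual ℝ V) : Dual ℝ (⋀[ℝ]^1 V) :=
  extendL (AlternatingMap.ofSubsingleton ℝ V ℝ (0 : Fin 1) φ)

theorem toAlt_contrBil_ιOne {s c : ℕ} (h : 1 + s = c) (h' : s + 1 = c) (x : V)
    (γ : Dual ℝ (⋀[ℝ]^c V)) (v : Fin s → V) :
    toAlt (contrBil h (ιOne x) γ) v = toAlt γ (fun i => Fin.cons (α := fun _ => V) x v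
      (Fin.cast h'.symm i)) := by
  subst h'
  rw [toAlt_apply, toAlt_apply]
  change γ (wedgeBil h (ιOne x) _) = _
  congr 1
  apply Subtype.ext
  simp only [exteriorPower.ιMulti_apply_coe, Fin.cast_eq_self]
  rw [ExteriorAlgebra.ιMulti_succ_apply]
  rfl

/-- The identity `∑ᵢ (θ ∧ eⁱ) ∧ ι_{eᵢ} γ = (s + 1) θ ∧ γ` for an `(s + 1)`-form `γ` and a basis
`eᵢ` of `V` with dual basis `eⁱ`. -/
theorem sum_wedge_contr {I : Type*} [Fintype I] (b : Basis I ℝ V) {r r' s c d : ℕ}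
    (h₁ : r + 1 = r') (h₂ : r' + s = d) (h₃ : r + c = d) (h₄ : 1 + s = c)
    (θ : Dual ℝ (⋀[ℝ]^r V)) (γ : Dual ℝ (⋀[ℝ]^c V)) :
    ∑ i, formWedgeBil h₂ (formWedgeBil h₁ θ (oneForm (b.coord i))) (contrBil h₄ (ιOne (b i)) γ)
      = (c : ℝ) • formWedgeBil h₃ θ γ := by
  obtain rfl : c = s + 1 := by omega
  subst h₁
  apply toAlt_injective
  rw [map_sum, map_smul,
    toAlt_formWedgeBil h₃ (alternatization_inv_factorial _).symm
      (alternatization_inv_factorial _).symm, ← alternatization_smul]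
  have hone (i : I) : toAlt (oneForm (b.coord i)) = MultilinearMap.alternatization
      (AlternatingMap.ofSubsingleton ℝ V ℝ (0 : Fin 1) (b.coord i)).toMultilinearMap := by
    rw [oneForm, toAlt_extendL, AlternatingMap.coe_alternatization]
    simp
  simp_rw [fun i => toAlt_formWedgeBil h₂
    (toAlt_formWedgeBil rfl (alternatization_inv_factorial (toAlt θ)).symm (hone i))
      (alternatization_inv_factorial (toAlt (contrBil h₄ (ιOne (b i)) γ))).symm]
  rw [← map_sum]
  congr 1
  ext v
  set x : V := v (Fin.cast h₃ (Fin.natAdd r 0)) with hx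
  set w : Fin s → V := fun i => v (Fin.cast h₂ (Fin.natAdd (r + 1) i)) with hw
  -- Expanding the first argument of `γ` in the basis is what collapses the sum.
  have key : ∑ i, b.coord i x * toAlt γ (Fin.cons (b i) w) = toAlt γ (Fin.cons x w) := by
    conv_rhs => rw [← b.sum_repr x]
    simpa using (map_sum ((toAlt γ).toMultilinearMap.toLinearMap (Fin.cons 0 w) 0)
      (fun i => b.repr x i • b i) Finset.univ).symm
  have hcons : (fun i => v (Fin.cast h₃ (Fin.natAdd r i))) = Fin.cons x w := by
    funext i
    refine Fin.cases rfl (fun i => ?_) i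
    simp only [hw, Fin.cons_succ]
    congr 1
    ext
    simp
    omega
  simp only [sum_apply, smul_apply, concatProd_apply,
    AlternatingMap.coe_multilinearMap, toAlt_contrBil_ιOne h₄ rfl, hcons, Fin.cast_eq_self,
    ← key, Finset.mul_sum, smul_eq_mul]
  refine Finset.sum_congr rfl fun i _ => ?_
  change (r.factorial : ℝ)⁻¹ * toAlt θ (fun k => v (Fin.cast h₃ (Fin.castAdd (s + 1) k)))
    * b.coord i x * ((s.factorial : ℝ)⁻¹ * toAlt γ (Fin.cons (b i) w)) = _
  rw [Nat.factorial_succ]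
  have : (s.factorial : ℝ) ≠ 0 := by exact_mod_cast s.factorial_ne_zero
  push_cast
  field_simp

theorem iotaT_tmul {r q c d : ℕ} (s : ℕ) (h₁ : q + s = c) (h₂ : r + s = d)
    (θ : Dual ℝ (⋀[ℝ]^r V)) (v : ⋀[ℝ]^q V) (γ : Dual ℝ (⋀[ℝ]^c V)) :
    iotaT s h₁ h₂ (θ ⊗ₜ v) γ = formWedgeBil h₂ θ (contrBil h₁ v γ) := by
  subst h₁; subst h₂; rfl

theorem contrBil_wedgeBil {p q u s c k : ℕ} (h₁ : p + q = u) (h₂ : u + s = c) (h₃ : p + k = c)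
    (h₄ : q + s = k) (v : ⋀[ℝ]^p V) (x : ⋀[ℝ]^q V) (γ : Dual ℝ (⋀[ℝ]^c V)) :
    contrBil h₂ (wedgeBil h₁ v x) γ = contrBil h₄ x (contrBil h₃ v γ) := by
  refine LinearMap.ext fun w => ?_
  change γ (wedgeBil h₂ (wedgeBil h₁ v x) w) = γ (wedgeBil h₃ v (wedgeBil h₄ x w))
  congr 1
  exact Subtype.ext (mul_assoc _ _ _)

/-- The lift `⋀^r V* ⊗ ⋀^q V → ⋀^{r+1} V* ⊗ ⋀^{q+1} V`,
`θ ⊗ v ↦ ∑ᵢ (θ ∧ eⁱ) ⊗ (v ∧ eᵢ)`, the product with the identity tensor of `V`. -/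
def wedgeId {I : Type*} [Fintype I] (b : Basis I ℝ V) {r r' q q' : ℕ}
    (hr : r + 1 = r') (hq : q + 1 = q') :
    (Dual ℝ (⋀[ℝ]^r V) ⊗[ℝ] ⋀[ℝ]^q V) →ₗ[ℝ] (Dual ℝ (⋀[ℝ]^r' V) ⊗[ℝ] ⋀[ℝ]^q' V) :=
  ∑ i, TensorProduct.map ((formWedgeBil hr).flip (oneForm (b.coord i)))
    ((wedgeBil hq).flip (ιOne (b i)))

/-- `ι_{T ∧ id}` is the multiple of `ι_T` by the degree `c - q` left over by `T`. -/
theorem iotaT_wedgeId {I : Type*} [Fintype I] (b : Basis I ℝ V) {r r' q q' c d s k : ℕ}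
    (hr : r + 1 = r') (hq : q + 1 = q') (hk : 1 + s = k)
    (h₁ : q + k = c) (h₂ : r + k = d) (h₁' : q' + s = c) (h₂' : r' + s = d)
    (T : Dual ℝ (⋀[ℝ]^r V) ⊗[ℝ] ⋀[ℝ]^q V) (γ : Dual ℝ (⋀[ℝ]^c V)) :
    iotaT s h₁' h₂' (wedgeId b hr hq T) γ = (k : ℝ) • iotaT k h₁ h₂ T γ := by
  induction T with
  | zero => simp
  | add T T' hT hT' => simp only [map_add, LinearMap.add_apply, hT, hT', smul_add]
  | tmul θ v =>
    rw [iotaT_tmul, ← sum_wedge_contr b hr h₂' h₂ hk]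
    simp only [wedgeId, LinearMap.sum_apply, map_sum, TensorProduct.map_tmul,
      LinearMap.flip_apply, iotaT_tmul, contrBil_wedgeBil hq h₁' h₁ hk]

/-- If `T₁ ∈ ⋀^{a-1} V* ⊗ ⋀^n V` admits `T ∈ ⋀^{a-j-1} V* ⊗ ⋀^{n-j} V`
with `ι_T β = ι_{T₁} β` for all `β ∈ S^n`, then it admits
`T' ∈ ⋀^{a-j} V* ⊗ ⋀^{n+1-j} V` with `ι_{T'} β = ι_{T₁} β` for all `β ∈ S^n`. -/
theorem sharp_extension_degree_step
    [FiniteDimensional ℝ V] (n : ℕ) (hn : 1 ≤ n)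
    (Sn : Submodule ℝ (Dual ℝ (⋀[ℝ]^n V)))
    (a j : ℕ) (hj1 : 1 ≤ j) (hjn : j ≤ n - 1) (ha : j + 1 ≤ a)
    (T₁ : Dual ℝ (⋀[ℝ]^(a - 1) V) ⊗[ℝ] ⋀[ℝ]^n V)
    (hT : ∃ T : Dual ℝ (⋀[ℝ]^(a - j - 1) V) ⊗[ℝ] ⋀[ℝ]^(n - j) V,
      ∀ β ∈ Sn,
        iotaT j (show (n - j) + j = n by omega)
          (show (a - j - 1) + j = a - 1 by omega) T β
        = iotaT 0 (show n + 0 = n by omega)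
            (show (a - 1) + 0 = a - 1 by omega) T₁ β) :
    ∃ T' : Dual ℝ (⋀[ℝ]^(a - j) V) ⊗[ℝ] ⋀[ℝ]^(n + 1 - j) V,
      ∀ β ∈ Sn,
        iotaT (j - 1) (show (n + 1 - j) + (j - 1) = n by omega)
          (show (a - j) + (j - 1) = a - 1 by omega) T' β
        = iotaT 0 (show n + 0 = n by omega)
            (show (a - 1) + 0 = a - 1 by omega) T₁ β := by
  obtain ⟨T, hT⟩ := hT
  refine ⟨(j : ℝ)⁻¹ • wedgeId (Module.finBasis ℝ V) (by omega) (by omega) T, fun β hβ => ?_⟩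
  have hj : (j : ℝ) ≠ 0 := by exact_mod_cast (by omega : j ≠ 0)
  rw [← hT β hβ, map_smul, LinearMap.smul_apply,
    iotaT_wedgeId _ _ _ (show 1 + (j - 1) = j by omega) (show n - j + j = n by omega)
      (show a - j - 1 + j = a - 1 by omega), smul_smul, inv_mul_cancel₀ hj, one_smul]

end GPB
end
end

section
/- Fix n ≥ 1, a subspace S^n ⊆ ⋀^n V*, integers a and j with 2 ≤ j ≤ n and a ≥ j, and suppose T ∈ ⋀^{a−j} V* ⊗ ⋀^{n+1−j} V and T₁ ∈ ⋀^{a−1} V* ⊗ ⋀^n V satisfy ι_T β = ι_{T₁} β for all β ∈ S^n. Then for every X ∈ V there exists T' ∈ ⋀^{a−j} V* ⊗ ⋀^{n+2−j} V such that ι_{T'} β = −ι_X(ι_{T₁} β) for all β ∈ S^n. -/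
/-!
The interior product by `X` is computed on `T` itself, so the hypothesis only serves to replace
`ι_{T₁} β` by `ι_T β`. By linearity let `T = θ ⊗ v` with `θ` of degree `r = a - j`, and write
`γ = ι_v β`, a form of degree `m = j - 1 ≥ 1`. The Leibniz rule gives
`ι_X (θ ∧ γ) = ι_X θ ∧ γ + (-1)^r θ ∧ ι_X γ`. The second term is the contraction of `β` by
`(-1)^r θ ⊗ (v ∧ X)`. In the first term, `ι_X θ` has degree one too small, and Euler's formula
`m γ = ∑ᵢ eⁱ ∧ ι_{eᵢ} γ` corrects this: since `m ≠ 0`, the term is the contraction of `β` by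
`m⁻¹ ∑ᵢ (ι_X θ ∧ eⁱ) ⊗ (v ∧ eᵢ)`.

Both identities are proved in the exterior algebra of `V*`, where contraction is
`CliffordAlgebra.contractLeft` and induction on the degree is available. They are transported to
forms along `exteriorPower.pairingDual`, which is surjective in finite dimension
(`pairingDual_surjective`) and respects products (`formWedgeBil_pairingDual`) and contractions
(`contrBil_pairingDual`).
-/

open Module
open scoped TensorProduct

noncomputable section

namespace GPB

variable {V : Type*} [AddCommGroup V] [Module ℝ V]

/-! ### Forms as elements of the exterior algebra of the dual space -/

open exteriorPower in
/-- The form `f₁ ∧ ⋯ ∧ fₙ` is the alternatization of the product `f₁ ⋯ fₙ`, with no factorial. -/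
theorem toAlt_pairingDual {n : ℕ} (f : Fin n → Dual ℝ V) :
    toAlt (pairingDual ℝ V n (ιMulti ℝ n f)) =
      MultilinearMap.alternatization
        ((MultilinearMap.mkPiAlgebra ℝ (Fin n) ℝ).compLinearMap f) := by
  ext v
  have h : toAlt (pairingDual ℝ V n (ιMulti ℝ n f)) v =
    pairingDual ℝ V n (ιMulti ℝ n f) (ιMulti ℝ n v) := rfl
  rw [h, pairingDual_ιMulti_ιMulti, Matrix.det_apply, MultilinearMap.alternatization_apply]
  simp

theorem formWedgeBil_apply {r m : ℕ} (α : Dual ℝ (⋀[ℝ]^r V)) (γ : Dual ℝ (⋀[ℝ]^m V))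
    (w : Fin (r + m) → V) :
    formWedgeBil rfl α γ (exteriorPower.ιMulti ℝ (r + m) w) =
      TensorProduct.lid ℝ ℝ ((toAlt α).domCoprod (toAlt γ) (w ∘ finSumFinEquiv)) := by
  simp [formWedgeBil, extendL, ExteriorAlgebra.liftAlternating_apply_ιMulti, Function.comp_def]

open exteriorPower in
/-- The pairing `⋀ V* → (⋀ V)*` sends products to wedge products of forms. On decomposables both
sides are alternatizations of the product of all the factors. -/
theorem formWedgeBil_pairingDual {r m t : ℕ} (h : r + m = t)
    (x : ⋀[ℝ]^r (Dual ℝ V)) (y : ⋀[ℝ]^m (Dual ℝ V)) :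
    formWedgeBil h (pairingDual ℝ V r x) (pairingDual ℝ V m y) =
      pairingDual ℝ V t (wedgeBil h x y) := by
  subst h
  suffices H : ((formWedgeBil rfl).comp (pairingDual ℝ V r)).compl₂ (pairingDual ℝ V m) =
      (wedgeBil rfl).compr₂ (pairingDual ℝ V (r + m)) from
    LinearMap.congr_fun (LinearMap.congr_fun H x) y
  refine exteriorPower.linearMap_ext (N := ⋀[ℝ]^m (Dual ℝ V) →ₗ[ℝ] Dual ℝ (⋀[ℝ]^(r + m) V)) ?_
  ext f : 1
  refine exteriorPower.linearMap_ext (N := Dual ℝ (⋀[ℝ]^(r + m) V)) ?_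
  ext g : 1
  apply exteriorPower.linearMap_ext
  ext w
  have hfg : wedgeBil rfl (ιMulti ℝ r f) (ιMulti ℝ m g) = ιMulti ℝ (r + m) (Fin.append f g) := by
    apply Subtype.ext
    exact ExteriorAlgebra.ιMulti_mul_ιMulti f g
  simp only [LinearMap.compAlternatingMap_apply, LinearMap.compl₂_apply, LinearMap.comp_apply,
    LinearMap.compr₂_apply, hfg, formWedgeBil_apply, toAlt_pairingDual,
    ← MultilinearMap.domCoprod_alternization, pairingDual_ιMulti_ιMulti]
  rw [← Matrix.det_submatrix_equiv_self finSumFinEquiv, Matrix.det_apply,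
    MultilinearMap.alternatization_apply, map_sum]
  refine Finset.sum_congr rfl fun σ _ => ?_
  rw [Units.smul_def, map_zsmul, Units.smul_def]
  simp


/-! ### Contraction in the exterior algebra -/

/-- Contraction of a decomposable element; the analogue of Laplace expansion along the first row. -/
theorem contractLeft_ιMulti {W : Type*} [AddCommGroup W] [Module ℝ W] (d : Dual ℝ W) {m : ℕ}
    (f : Fin (m + 1) → W) :
    CliffordAlgebra.contractLeft (Q := 0) d (ExteriorAlgebra.ιMulti ℝ (m + 1) f) =
      ∑ k : Fin (m + 1), ((-1) ^ (k : ℕ) * d (f k)) •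
        ExteriorAlgebra.ιMulti ℝ m (fun i => f (k.succAbove i)) := by
  induction m with
  | zero =>
    rw [ExteriorAlgebra.ιMulti_succ_apply, ExteriorAlgebra.ι, CliffordAlgebra.contractLeft_ι_mul]
    simp [ExteriorAlgebra.ιMulti_apply]
  | succ m ih =>
    rw [ExteriorAlgebra.ιMulti_succ_apply, ExteriorAlgebra.ι, CliffordAlgebra.contractLeft_ι_mul,
      ih, sub_eq_add_neg, Finset.mul_sum, ← Finset.sum_neg_distrib]
    conv_rhs => rw [Fin.sum_univ_succ]
    congr 1
    · simp [Matrix.vecTail, Function.comp_def]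
    · refine Finset.sum_congr rfl fun k _ => ?_
      rw [ExteriorAlgebra.ιMulti_succ_apply (fun i => f (k.succ.succAbove i))]
      simp [Matrix.vecTail, Function.comp_def, ExteriorAlgebra.ι, pow_succ]

theorem contractLeft_mem {W : Type*} [AddCommGroup W] [Module ℝ W] (d : Dual ℝ W) {m n : ℕ}
    (h : 1 + m = n) {x : ExteriorAlgebra ℝ W} (hx : x ∈ ⋀[ℝ]^n W) :
    CliffordAlgebra.contractLeft (Q := 0) d x ∈ ⋀[ℝ]^m W := by
  obtain rfl : n = m + 1 := by omega
  rw [← ExteriorAlgebra.ιMulti_span_fixedDegree] at hx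
  induction hx using Submodule.span_induction with
  | mem x hx =>
    obtain ⟨f, rfl⟩ := hx
    rw [contractLeft_ιMulti]
    exact Submodule.sum_mem _ fun k _ => Submodule.smul_mem _ _
      (ExteriorAlgebra.ιMulti_range ℝ m (Set.mem_range_self _))
  | zero => simp
  | add x y _ _ hx hy => rw [map_add]; exact add_mem hx hy
  | smul c x _ hx => rw [map_smul]; exact Submodule.smul_mem _ _ hx

/-- Contraction of an `n`-vector of `W` by a covector, as a map `⋀^n W → ⋀^m W` with `1 + m = n`.
Applied with `W = V*`, it models the interior product of forms on `V` by a vector. -/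
def contractBil {W : Type*} [AddCommGroup W] [Module ℝ W] (d : Dual ℝ W) {m n : ℕ}
    (h : 1 + m = n) : ⋀[ℝ]^n W →ₗ[ℝ] ⋀[ℝ]^m W :=
  (CliffordAlgebra.contractLeft (Q := 0) d).restrict fun _ hx => contractLeft_mem d h hx

open exteriorPower in
/-- The pairing `⋀ V* → (⋀ V)*` intertwines contraction in the exterior algebra of `V*` with the
interior product of forms by a vector. -/
theorem contrBil_pairingDual {m n : ℕ} (h : 1 + m = n) (X : V) (x : ⋀[ℝ]^n (Dual ℝ V)) :
    contrBil h (ιOne X) (pairingDual ℝ V n x) =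
      pairingDual ℝ V m (contractBil (Dual.eval ℝ V X) h x) := by
  obtain rfl : n = m + 1 := by omega
  suffices H : (contrBil h (ιOne X)).comp (pairingDual ℝ V (m + 1)) =
      (pairingDual ℝ V m).comp (contractBil (Dual.eval ℝ V X) h) from LinearMap.congr_fun H x
  refine exteriorPower.linearMap_ext (N := Dual ℝ (⋀[ℝ]^m V)) ?_
  ext f : 1
  apply exteriorPower.linearMap_ext
  ext w
  have hX : wedgeBil h (ιOne X) (ιMulti ℝ m w) = ιMulti ℝ (m + 1) (Fin.cons X w) := by
    apply Subtype.ext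
    simp [wedgeBil, ιOne, ExteriorAlgebra.ιMulti_succ_apply, Matrix.vecTail, Function.comp_def]
  have hf : contractBil (Dual.eval ℝ V X) h (ιMulti ℝ (m + 1) f) =
      ∑ k : Fin (m + 1), ((-1) ^ (k : ℕ) * f k X) • ιMulti ℝ m (fun i => f (k.succAbove i)) := by
    apply Subtype.ext
    refine (contractLeft_ιMulti _ f).trans ?_
    simp
  have hl : contrBil h (ιOne X) (pairingDual ℝ V (m + 1) (ιMulti ℝ (m + 1) f)) (ιMulti ℝ m w) =
      pairingDual ℝ V (m + 1) (ιMulti ℝ (m + 1) f) (wedgeBil h (ιOne X) (ιMulti ℝ m w)) := rfl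
  simp only [LinearMap.compAlternatingMap_apply, LinearMap.comp_apply, hl, hX, hf, map_sum,
    map_smul, LinearMap.sum_apply, LinearMap.smul_apply, pairingDual_ιMulti_ιMulti,
    Matrix.det_succ_row_zero, smul_eq_mul]
  refine Finset.sum_congr rfl fun k _ => ?_
  congr 1

open exteriorPower in
theorem pairingDual_surjective [FiniteDimensional ℝ V] (n : ℕ) :
    Function.Surjective (pairingDual ℝ V n) := by
  intro φ
  let B := (Module.finBasis ℝ V).exteriorPower n
  refine ⟨∑ s, φ (B s) • ιMulti_family ℝ n (Module.finBasis ℝ V).coord s, ?_⟩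
  have hB (s) : pairingDual ℝ V n (ιMulti_family ℝ n (Module.finBasis ℝ V).coord s) = B.coord s :=
    (basis_coord ℝ n _ s).symm
  simp only [map_sum, map_smul, hB]
  exact B.sum_dual_apply_smul_coord φ

/-- The graded Leibniz rule for contraction by a covector. -/
theorem contractLeft_mul {W : Type*} [AddCommGroup W] [Module ℝ W] (d : Dual ℝ W) {r : ℕ}
    {x : ExteriorAlgebra ℝ W} (hx : x ∈ ⋀[ℝ]^r W) (y : ExteriorAlgebra ℝ W) :
    CliffordAlgebra.contractLeft (Q := 0) d (x * y) =
      CliffordAlgebra.contractLeft (Q := 0) d x * y +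
        (-1 : ℝ) ^ r • (x * CliffordAlgebra.contractLeft (Q := 0) d y) := by
  induction hx using Submodule.pow_induction_on_left' with
  | algebraMap c =>
    have h₁ := CliffordAlgebra.contractLeft_algebraMap_mul (Q := (0 : QuadraticForm ℝ W)) d c y
    have h₂ := CliffordAlgebra.contractLeft_algebraMap (Q := (0 : QuadraticForm ℝ W)) d c
    rw [pow_zero, one_smul]
    refine h₁.trans ?_
    erw [h₂, zero_mul, zero_add]
  | add x x' i _ _ hx hx' => rw [add_mul, map_add, hx, hx', map_add, add_mul, add_mul, smul_add]; abel
  | mem_mul w hw i x _ hx =>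
    obtain ⟨w, rfl⟩ := hw
    rw [mul_assoc, ExteriorAlgebra.ι, CliffordAlgebra.contractLeft_ι_mul,
      CliffordAlgebra.contractLeft_ι_mul, hx, mul_add, sub_mul, smul_mul_assoc, mul_assoc,
      mul_assoc, pow_succ, mul_smul_comm, mul_neg_one, neg_smul]
    abel

/-- Euler's formula: `∑ᵢ bᵢ ∧ (dᵢ ⌟ x) = m x` for `x` of degree `m`, when the families `b` and `d`
resolve the identity. -/
theorem sum_ι_mul_contractLeft {W ι : Type*} [AddCommGroup W] [Module ℝ W] [Fintype ι] (b : ι → W)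
    (d : ι → Dual ℝ W) (hbd : ∀ w, ∑ i, d i w • b i = w) {m : ℕ}
    {x : ExteriorAlgebra ℝ W} (hx : x ∈ ⋀[ℝ]^m W) :
    ∑ i, ExteriorAlgebra.ι ℝ (b i) * CliffordAlgebra.contractLeft (Q := 0) (d i) x =
      (m : ℝ) • x := by
  induction hx using Submodule.pow_induction_on_left' with
  | algebraMap c =>
    simp [ExteriorAlgebra, CliffordAlgebra.contractLeft_algebraMap]
  | add x x' i _ _ hx hx' => simp only [map_add, mul_add, Finset.sum_add_distrib, hx, hx', smul_add]
  | mem_mul w hw k x _ hx =>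
    obtain ⟨w, rfl⟩ := hw
    have hanti (i : ι) : ExteriorAlgebra.ι ℝ (b i) * ExteriorAlgebra.ι ℝ w =
        -(ExteriorAlgebra.ι ℝ w * ExteriorAlgebra.ι ℝ (b i)) :=
      eq_neg_of_add_eq_zero_left (ExteriorAlgebra.ι_add_mul_swap _ _)
    have hterm (i : ι) : ExteriorAlgebra.ι ℝ (b i) *
        CliffordAlgebra.contractLeft (Q := 0) (d i) (ExteriorAlgebra.ι ℝ w * x) =
        ExteriorAlgebra.ι ℝ (d i w • b i) * x + ExteriorAlgebra.ι ℝ w *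
          (ExteriorAlgebra.ι ℝ (b i) * CliffordAlgebra.contractLeft (Q := 0) (d i) x) := by
      have := CliffordAlgebra.contractLeft_ι_mul (Q := (0 : QuadraticForm ℝ W)) (d := d i) w x
      erw [this]
      rw [mul_sub, ← mul_assoc (ExteriorAlgebra.ι ℝ w), map_smul, smul_mul_assoc, mul_smul_comm,
        ← neg_neg (ExteriorAlgebra.ι ℝ w * ExteriorAlgebra.ι ℝ (b i)), ← hanti, neg_mul,
        ← sub_eq_add_neg, mul_assoc]
    rw [Finset.sum_congr rfl fun i _ => hterm i, Finset.sum_add_distrib, ← Finset.sum_mul,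
      ← map_sum, hbd, ← Finset.mul_sum, hx, mul_smul_comm]
    push_cast
    rw [add_smul, one_smul, add_comm]

theorem contrBil_contrBil {p q s t c u : ℕ} (h₁ : p + s = c) (h₂ : q + t = s) (h₃ : p + q = u)
    (h₄ : u + t = c) (v : ⋀[ℝ]^p V) (w : ⋀[ℝ]^q V) (γ : Dual ℝ (⋀[ℝ]^c V)) :
    contrBil h₂ w (contrBil h₁ v γ) = contrBil h₄ (wedgeBil h₃ v w) γ := by
  refine LinearMap.ext fun z => ?_
  refine congrArg γ (Subtype.ext ?_)
  exact (mul_assoc _ _ _).symm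

open exteriorPower in
/-- For a fixed form `θ`, the operator `γ ↦ ι_X (θ ∧ γ)` on forms of positive degree is a sum of
operators `γ ↦ η ∧ ι_u γ` with `η` of the same degree as `θ` and `u` a vector. -/
theorem exists_contr_wedge [FiniteDimensional ℝ V] {r s d e : ℕ} (h : r + (s + 1) = d)
    (he : 1 + e = d) (he' : r + s = e) (θ : Dual ℝ (⋀[ℝ]^r V)) (X : V) :
    ∃ (k : ℕ) (η : Fin k → Dual ℝ (⋀[ℝ]^r V)) (e' : Fin k → V),
      ∀ γ : Dual ℝ (⋀[ℝ]^(s + 1) V),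
        contrBil he (ιOne X) (formWedgeBil h θ γ) =
          formWedgeBil he' ((-1 : ℝ) ^ r • θ) (contrBil (add_comm 1 s) (ιOne X) γ) +
          ∑ i, formWedgeBil he' (η i) (contrBil (add_comm 1 s) (ιOne (e' i)) γ) := by
  obtain ⟨x, rfl⟩ := pairingDual_surjective r θ
  let b := Module.finBasis ℝ V
  have hmem (i) : CliffordAlgebra.contractLeft (Q := 0) (Dual.eval ℝ V X) x.1 *
      ExteriorAlgebra.ι ℝ (b.coord i) ∈ ⋀[ℝ]^r (Dual ℝ V) := by
    rcases r with _ | r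
    -- A form of degree zero is a scalar, so its contraction vanishes.
    · have : CliffordAlgebra.contractLeft (Q := 0) (Dual.eval ℝ V X) x.1 = 0 := by
        obtain ⟨x, hx⟩ := x
        rw [ExteriorAlgebra.exteriorPower, pow_zero] at hx
        obtain ⟨c, rfl⟩ := Submodule.mem_one.mp hx
        exact CliffordAlgebra.contractLeft_algebraMap ..
      erw [this]
      rw [zero_mul]
      exact zero_mem _
    · exact wedge_mem rfl (contractLeft_mem _ (add_comm 1 r) x.2)
        (ιOne (b.coord i)).2
  refine ⟨_, fun i => ((s : ℝ) + 1)⁻¹ • pairingDual ℝ V r ⟨_, hmem i⟩, b, fun γ => ?_⟩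
  obtain ⟨y, rfl⟩ := pairingDual_surjective (s + 1) γ
  simp only [← map_smul, formWedgeBil_pairingDual, contrBil_pairingDual, ← map_sum, ← map_add]
  congr 1
  apply Subtype.ext
  -- Euler's formula raises the form factor `ι_X θ` back to the degree of `θ`; it needs `s + 1 ≠ 0`.
  have hE := sum_ι_mul_contractLeft (fun i => b.coord i) (fun i => Dual.eval ℝ V (b i))
    (fun w => b.sum_dual_apply_smul_coord w) y.2
  have hs : ((s : ℝ) + 1) ≠ 0 := by positivity
  have hL := contractLeft_mul (Dual.eval ℝ V X) x.2 y.1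
  push_cast at hE
  refine hL.trans ?_
  rw [add_comm]
  rw [eq_inv_smul_iff₀ hs |>.mpr hE.symm |> fun h => congrArg (fun z => _ * z) h]
  simp [wedgeBil, contractBil, Finset.mul_sum, mul_assoc, Finset.smul_sum]


/-- The interior product of `ι_T γ` by `X` is, for all `γ` at once, the contraction of `γ` by some
`T'` with one more vector factor than `T` and the same form degree. -/
theorem exists_iotaT_eq_contr [FiniteDimensional ℝ V] {r q q' s s₁ c d e : ℕ}
    (hs : s₁ = s + 1) (hq : q + 1 = q') (h₁ : q + s₁ = c) (h₂ : r + s₁ = d) (h₃ : q' + s = c)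
    (h₄ : r + s = e) (he : 1 + e = d) (X : V) (T : Dual ℝ (⋀[ℝ]^r V) ⊗[ℝ] ⋀[ℝ]^q V) :
    ∃ T' : Dual ℝ (⋀[ℝ]^r V) ⊗[ℝ] ⋀[ℝ]^q' V, ∀ γ,
      iotaT s h₃ h₄ T' γ = contrBil he (ιOne X) (iotaT s₁ h₁ h₂ T γ) := by
  subst hs
  induction T using TensorProduct.induction_on with
  | zero => exact ⟨0, fun γ => by simp⟩
  | add T₁ T₂ ih₁ ih₂ =>
    obtain ⟨T₁', h₁'⟩ := ih₁
    obtain ⟨T₂', h₂'⟩ := ih₂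
    exact ⟨T₁' + T₂', fun γ => by simp [h₁', h₂']⟩
  | tmul θ v =>
    obtain ⟨k, η, e', hη⟩ := exists_contr_wedge h₂ he h₄ θ X
    refine ⟨((-1 : ℝ) ^ r • θ) ⊗ₜ wedgeBil hq v (ιOne X) +
      ∑ i, η i ⊗ₜ wedgeBil hq v (ιOne (e' i)), fun γ => ?_⟩
    rw [iotaT_tmul, hη]
    simp only [map_add, map_sum, LinearMap.add_apply, LinearMap.sum_apply, iotaT_tmul,
      contrBil_contrBil h₁ (add_comm 1 s) hq h₃]

/-- If `T ∈ ⋀^{a-j} V* ⊗ ⋀^{n+1-j} V` and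
`T₁ ∈ ⋀^{a-1} V* ⊗ ⋀^n V` satisfy `ι_T β = ι_{T₁} β` for all `β ∈ S^n`, then for
every `X ∈ V` there is `T' ∈ ⋀^{a-j} V* ⊗ ⋀^{n+2-j} V` with
`ι_{T'} β = -ι_X (ι_{T₁} β)` for all `β ∈ S^n`. -/
theorem sharp_extension_interior_product_step
    [FiniteDimensional ℝ V] (n : ℕ) (hn : 1 ≤ n)
    (Sn : Submodule ℝ (Dual ℝ (⋀[ℝ]^n V)))
    (a j : ℕ) (hj2 : 2 ≤ j) (hjn : j ≤ n) (haj : j ≤ a)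
    (T : Dual ℝ (⋀[ℝ]^(a - j) V) ⊗[ℝ] ⋀[ℝ]^(n + 1 - j) V)
    (T₁ : Dual ℝ (⋀[ℝ]^(a - 1) V) ⊗[ℝ] ⋀[ℝ]^n V)
    (hTT₁ : ∀ β ∈ Sn,
      iotaT (j - 1) (show (n + 1 - j) + (j - 1) = n by omega)
        (show (a - j) + (j - 1) = a - 1 by omega) T β
      = iotaT 0 (show n + 0 = n by omega)
          (show (a - 1) + 0 = a - 1 by omega) T₁ β) :
    ∀ X : V, ∃ T' : Dual ℝ (⋀[ℝ]^(a - j) V) ⊗[ℝ] ⋀[ℝ]^(n + 2 - j) V,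
      ∀ β ∈ Sn,
        iotaT (j - 2) (show (n + 2 - j) + (j - 2) = n by omega)
          (show (a - j) + (j - 2) = a - 2 by omega) T' β
        = - contrBil (show 1 + (a - 2) = a - 1 by omega) (ιOne X)
              (iotaT 0 (show n + 0 = n by omega)
                (show (a - 1) + 0 = a - 1 by omega) T₁ β) := by
  intro X
  obtain ⟨T', hT'⟩ := exists_iotaT_eq_contr (show j - 1 = (j - 2) + 1 by omega)
    (show (n + 1 - j) + 1 = n + 2 - j by omega) (show (n + 1 - j) + (j - 1) = n by omega)
    (show (a - j) + (j - 1) = a - 1 by omega) (show (n + 2 - j) + (j - 2) = n by omega)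
    (show (a - j) + (j - 2) = a - 2 by omega) (show 1 + (a - 2) = a - 1 by omega) X T
  refine ⟨(-1 : ℝ) • T', fun β hβ => ?_⟩
  rw [← hTT₁ β hβ, ← hT' β, map_smul, LinearMap.smul_apply, neg_one_smul]

end GPB
end
end
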